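/- Let f be a meromorphic solution on a punctured disc around a of a second-order ODE f'' = (q(x) − E) f, where q is meromorphic at a, even in (x−a), with a double pole at a whose leading coefficient is l(l+1) for a nonnegative integer l. Then the local monodromy of the solution space of this equation around a is trivial (the monodromy matrix is the identity). -/

import Mathlib

open Metric

namespace Frob

/-- Coefficients converge absolutely on the disc of radius `R`. -/
def Good (R : ℝ) (c : ℕ → ℂ) : Prop := ∀ r : ℝ, 0 ≤ r → r < R → Summable fun n => ‖c n‖ * r ^ n

/-- The sum of the power series. -/
noncomputable def G (c : ℕ → ℂ) (z : ℂ) : ℂ := ∑' n, c n * z ^ n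

lemma Good.summable {R : ℝ} {c : ℕ → ℂ} (h : Good R c) {z : ℂ} (hz : ‖z‖ < R) :
    Summable fun n => ‖c n * z ^ n‖ := by
  simpa using h ‖z‖ (norm_nonneg z) hz

lemma Good.mul_n {R : ℝ} {c : ℕ → ℂ} (h : Good R c) : Good R (fun n => (n : ℂ) * c n) := by
  intro r hr hrR
  obtain ⟨s, hrs, hsR⟩ := exists_between hrR
  have hs0 : 0 < s := hr.trans_lt hrs
  have hlim := tendsto_self_mul_const_pow_of_lt_one (r := r / s) (by positivity)
    ((div_lt_one hs0).2 hrs)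
  obtain ⟨C, hC⟩ := hlim.bddAbove_range
  have hs := (h s hs0.le hsR).mul_left C
  refine Summable.of_nonneg_of_le (fun n => by positivity) (fun n => ?_) hs
  have h1 : (n : ℝ) * (r / s) ^ n ≤ C := hC ⟨n, rfl⟩
  have h2 : ‖(n : ℂ) * c n‖ * r ^ n = ((n : ℝ) * (r / s) ^ n) * (‖c n‖ * s ^ n) := by
    rw [norm_mul, Complex.norm_natCast, div_pow]
    field_simp
  rw [h2]
  exact mul_le_mul_of_nonneg_right h1 (by positivity)

lemma Good.add_mul {R : ℝ} {c : ℕ → ℂ} (h : Good R c) (ρ : ℂ) :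
    Good R (fun n => ((n : ℂ) + ρ) * c n) := by
  intro r hr hrR
  have h1 := (h.mul_n r hr hrR).add ((h r hr hrR).mul_left ‖ρ‖)
  refine Summable.of_nonneg_of_le (fun n => by positivity) (fun n => ?_) h1
  have : ‖((n : ℂ) + ρ) * c n‖ ≤ ‖(n : ℂ) * c n‖ + ‖ρ‖ * ‖c n‖ := by
    rw [_root_.add_mul, ← norm_mul ρ]; exact norm_add_le _ _
  calc _ ≤ (‖(n : ℂ) * c n‖ + ‖ρ‖ * ‖c n‖) * r ^ n := by gcongr
    _ = _ := by ring

lemma Good.hasDerivAt {R : ℝ} {c : ℕ → ℂ} (h : Good R c) {z : ℂ} (hz : ‖z‖ < R) :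
    HasDerivAt (G c) (∑' n : ℕ, c n * (n * z ^ (n - 1))) z := by
  obtain ⟨r, hzr, hrR⟩ := exists_between hz
  have hr0 : 0 < r := (norm_nonneg z).trans_lt hzr
  have hs := (h.mul_n r hr0.le hrR).mul_left r⁻¹
  refine hasDerivAt_tsum_of_isPreconnected (t := ball (0 : ℂ) r) (g := fun n z => c n * z ^ n)
    (g' := fun n z => c n * (n * z ^ (n - 1))) (y₀ := 0) hs isOpen_ball
    (convex_ball 0 r).isPreconnected ?_ ?_ (mem_ball_self hr0) ?_ (by simpa using hzr)
  · intro n y _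
    exact (hasDerivAt_pow n y).const_mul (c n)
  · intro n y hy
    have hy' : ‖y‖ ≤ r := by simpa using (mem_ball.1 hy).le
    rcases n with _ | n
    · simp
    · have : r⁻¹ * (‖((n + 1 : ℕ) : ℂ) * c (n + 1)‖ * r ^ (n + 1))
          = ‖c (n+1)‖ * (‖((n + 1 : ℕ) : ℂ)‖ * r ^ n) := by
        rw [norm_mul]; field_simp; ring
      rw [this, norm_mul, norm_mul, norm_pow]
      simp only [Nat.add_sub_cancel]
      gcongr
  · exact (h.summable (z := 0) (by simpa using hr0.trans hrR)).of_norm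

lemma Good.G_add_mul {R : ℝ} {c : ℕ → ℂ} (h : Good R c) (ρ : ℂ) {z : ℂ} (hz : ‖z‖ < R) :
    G (fun n => ((n : ℂ) + ρ) * c n) z = z * (∑' n : ℕ, c n * (n * z ^ (n - 1))) + ρ * G c z := by
  unfold G
  rw [← tsum_mul_left, ← tsum_mul_left]
  have e : ∀ n : ℕ, z * (c n * (n * z ^ (n - 1))) = (n : ℂ) * c n * z ^ n := by
    intro n
    rcases n with _ | n
    · simp
    · simp only [Nat.add_sub_cancel]; ring
  simp_rw [e]
  rw [← Summable.tsum_add (h.mul_n.summable hz).of_norm ((h.summable hz).of_norm.mul_left ρ)]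
  congr 1; ext n; ring

/-- `z ^ ρ * G c z`, recentred at `a`. -/
noncomputable def F (a : ℂ) (ρ : ℤ) (c : ℕ → ℂ) (x : ℂ) : ℂ := (x - a) ^ ρ * G c (x - a)

lemma Good.hasDerivAt_F {R : ℝ} {c : ℕ → ℂ} (h : Good R c) (a : ℂ) (ρ : ℤ) {x : ℂ}
    (hx : x ∈ ball a R \ {a}) :
    HasDerivAt (F a ρ c) (F a (ρ - 1) (fun n => ((n : ℂ) + ρ) * c n) x) x := by
  have hxa : x - a ≠ 0 := sub_ne_zero.2 hx.2
  have hn : ‖x - a‖ < R := by simpa [dist_eq_norm] using hx.1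
  have h1 := (hasDerivAt_zpow ρ (x - a) (Or.inl hxa)).mul (h.hasDerivAt hn)
  have h2 := h1.comp_sub_const x a
  refine h2.congr_deriv ?_
  unfold F
  rw [h.G_add_mul ρ hn, zpow_sub_one₀ hxa]
  field_simp
  ring

lemma punct_open (a : ℂ) (R : ℝ) : IsOpen (ball a R \ {a}) :=
  isOpen_ball.sdiff isClosed_singleton

lemma Good.analyticOn_F {R : ℝ} {c : ℕ → ℂ} (h : Good R c) (a : ℂ) (ρ : ℤ) :
    AnalyticOn ℂ (F a ρ c) (ball a R \ {a}) := by
  have : DifferentiableOn ℂ (F a ρ c) (ball a R \ {a}) := fun x hx =>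
    (h.hasDerivAt_F a ρ hx).differentiableAt.differentiableWithinAt
  exact (this.analyticOnNhd (punct_open a R)).analyticOn

lemma Good.deriv2_F {R : ℝ} {c : ℕ → ℂ} (h : Good R c) (a : ℂ) (ρ : ℤ) {x : ℂ}
    (hx : x ∈ ball a R \ {a}) :
    deriv (deriv (F a ρ c)) x =
      F a (ρ - 2) (fun n => ((n : ℂ) + ρ - 1) * (((n : ℂ) + ρ) * c n)) x := by
  have e : deriv (F a ρ c) =ᶠ[nhds x] F a (ρ - 1) (fun n => ((n : ℂ) + ρ) * c n) := by
    filter_upwards [(punct_open a R).mem_nhds hx] with y hy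
    exact (h.hasDerivAt_F a ρ hy).deriv
  rw [e.deriv_eq, ((h.add_mul ρ).hasDerivAt_F a (ρ - 1) hx).deriv]
  have : ρ - 1 - 1 = ρ - 2 := by ring
  rw [this]
  congr 1; ext n; push_cast; ring

/-- Frobenius recursion. -/
noncomputable def cf (p d : ℕ → ℂ) : ℕ → ℂ
  | 0 => 1
  | n + 1 => (d (n + 1))⁻¹ * ∑ m : Fin (n + 1), p (n + 1 - m) * cf p d m
decreasing_by exact m.2

lemma cf_zero (p d : ℕ → ℂ) : cf p d 0 = 1 := by rw [cf]

lemma cf_pos (p d : ℕ → ℂ) {n : ℕ} (hn : n ≠ 0) :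
    cf p d n = (d n)⁻¹ * ∑ m ∈ Finset.range n, p (n - m) * cf p d m := by
  obtain ⟨k, rfl⟩ := Nat.exists_eq_succ_of_ne_zero hn
  rw [cf, Finset.sum_range]

lemma odd_sum (p c : ℕ → ℂ) (hp : ∀ n, Odd n → p n = 0) (n : ℕ) (hn : Odd n)
    (hc : ∀ m < n, Odd m → c m = 0) : ∑ m ∈ Finset.range n, p (n - m) * c m = 0 := by
  refine Finset.sum_eq_zero fun m hm => ?_
  have hm' := Finset.mem_range.1 hm
  rcases Nat.even_or_odd m with h | h
  · rw [hp _ (Nat.Odd.sub_even hm'.le hn h), zero_mul]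
  · rw [hc m hm' h, mul_zero]

lemma cf_odd (p d : ℕ → ℂ) (hp : ∀ n, Odd n → p n = 0) (n : ℕ) (hn : Odd n) : cf p d n = 0 := by
  induction n using Nat.strong_induction_on with
  | _ n ih =>
    rw [cf_pos p d (by rintro rfl; simp at hn), odd_sum p _ hp n hn (fun m hm ho => ih m hm ho),
      mul_zero]

lemma cf_rec (p d : ℕ → ℂ) (hp : ∀ n, Odd n → p n = 0) (hd0 : d 0 = 0)
    (hd : ∀ n, n ≠ 0 → d n = 0 → Odd n) (n : ℕ) :
    d n * cf p d n = ∑ m ∈ Finset.range n, p (n - m) * cf p d m := by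
  by_cases hn : n = 0
  · subst hn; simp [hd0]
  by_cases h : d n = 0
  · rw [h, zero_mul, odd_sum p _ hp n (hd n hn h) (fun m _ ho => cf_odd p d hp m ho)]
  · rw [cf_pos p d hn, mul_inv_cancel_left₀ h]

lemma summable_aux (u K : ℕ → ℝ) (hu : ∀ n, 0 ≤ u n) (hK : ∀ n, 0 ≤ K n) (hs : Summable K)
    (h : ∀ n, n ≠ 0 → u n ≤ K n * ∑ m ∈ Finset.range n, u m) : Summable u := by
  have key : ∀ n, ∑ m ∈ Finset.range n, u m ≤ u 0 * Real.exp (∑ m ∈ Finset.range n, K m) := by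
    intro n
    induction n with
    | zero => simpa using hu 0
    | succ n ih =>
      by_cases hn : n = 0
      · subst hn
        simpa using le_mul_of_one_le_right (hu 0) (Real.one_le_exp (hK 0))
      · rw [Finset.sum_range_succ, Finset.sum_range_succ, Real.exp_add]
        have h0 : 0 ≤ ∑ m ∈ Finset.range n, u m := Finset.sum_nonneg fun m _ => hu m
        calc _ ≤ (∑ m ∈ Finset.range n, u m) * (K n + 1) := by linarith [h n hn]
          _ ≤ (∑ m ∈ Finset.range n, u m) * Real.exp (K n) :=
            mul_le_mul_of_nonneg_left (Real.add_one_le_exp _) h0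
          _ ≤ (u 0 * Real.exp (∑ m ∈ Finset.range n, K m)) * Real.exp (K n) :=
            mul_le_mul_of_nonneg_right ih (Real.exp_pos _).le
          _ = _ := by ring
  refine summable_of_sum_range_le (c := u 0 * Real.exp (∑' m, K m)) hu fun n => (key n).trans ?_
  refine mul_le_mul_of_nonneg_left (Real.exp_le_exp.2 ?_) (hu 0)
  exact hs.sum_le_tsum _ (fun m _ => hK m)

lemma cf_good {R : ℝ} (p d : ℕ → ℂ) (hp : Good R p) (C : ℝ)
    (hd : ∀ n, n ≠ 0 → ‖(d n)⁻¹‖ ≤ C * (1 / (n : ℝ) ^ 2)) : Good R (cf p d) := by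
  have good_pos : ∀ r : ℝ, 0 < r → r < R → Summable fun n => ‖cf p d n‖ * r ^ n := by
    intro r hr hrR
    obtain ⟨M, hM⟩ := (hp r hr.le hrR).tendsto_atTop_zero.bddAbove_range
    have hM' : ∀ n, ‖p n‖ * r ^ n ≤ M := fun n => hM ⟨n, rfl⟩
    have hM0 : 0 ≤ M := le_trans (by positivity) (hM' 0)
    have hC0 : 0 ≤ C := by
      have := (norm_nonneg _).trans (hd 1 one_ne_zero)
      simpa using this
    refine summable_aux _ (fun n => M * (C * (1 / (n : ℝ) ^ 2))) (fun n => by positivity)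
      (fun n => by positivity)
      (((Real.summable_one_div_nat_pow.2 one_lt_two).mul_left C).mul_left M) ?_
    intro n hn
    rw [cf_pos p d hn, norm_mul]
    have hsum : ‖∑ m ∈ Finset.range n, p (n - m) * cf p d m‖ * r ^ n
        ≤ M * ∑ m ∈ Finset.range n, ‖cf p d m‖ * r ^ m := by
      refine (mul_le_mul_of_nonneg_right (norm_sum_le _ _) (by positivity)).trans ?_
      rw [Finset.sum_mul, Finset.mul_sum]
      refine Finset.sum_le_sum fun m hm => ?_
      have hm' := (Finset.mem_range.1 hm).le
      have e : r ^ n = r ^ (n - m) * r ^ m := by rw [← pow_add, Nat.sub_add_cancel hm']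
      rw [norm_mul, e]
      calc _ = (‖p (n - m)‖ * r ^ (n - m)) * (‖cf p d m‖ * r ^ m) := by ring
        _ ≤ _ := mul_le_mul_of_nonneg_right (hM' _) (by positivity)
    calc _ = ‖(d n)⁻¹‖ * (‖∑ m ∈ Finset.range n, p (n - m) * cf p d m‖ * r ^ n) := by ring
      _ ≤ (C * (1 / (n : ℝ) ^ 2)) * (M * ∑ m ∈ Finset.range n, ‖cf p d m‖ * r ^ m) :=
        mul_le_mul (hd n hn) hsum (by positivity) (by positivity)
      _ = _ := by ring
  intro r hr hrR
  rcases hr.eq_or_lt with rfl | h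
  · refine summable_of_ne_finset_zero (s := {0}) fun n hn => ?_
    have : n ≠ 0 := by simpa using hn
    simp [this]
  · exact good_pos r h hrR

/-- denominators -/
noncomputable def dd (ρ : ℤ) (n : ℕ) : ℂ := (n : ℂ) * ((n : ℂ) + 2 * ρ - 1)

lemma dd_odd (ρ : ℤ) (n : ℕ) (hn : n ≠ 0) (h : dd ρ n = 0) : Odd n := by
  have h1 : (n : ℂ) + 2 * ρ - 1 = 0 := (mul_eq_zero.1 h).resolve_left (Nat.cast_ne_zero.2 hn)
  have h2 : (n : ℤ) + 2 * ρ - 1 = 0 := by exact_mod_cast h1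
  rw [← Int.odd_coe_nat]
  exact ⟨-ρ, by omega⟩

lemma dd_bound (ρ : ℤ) (n : ℕ) (hn : n ≠ 0) :
    ‖(dd ρ n)⁻¹‖ ≤ ((|2 * ρ - 1| + 1 : ℤ) : ℝ) * (1 / (n : ℝ) ^ 2) := by
  have hn' : (0 : ℝ) < n := by exact_mod_cast Nat.pos_of_ne_zero hn
  by_cases h0 : (n : ℤ) + 2 * ρ - 1 = 0
  · have : dd ρ n = 0 := by
      unfold dd
      have : (n : ℂ) + 2 * ρ - 1 = 0 := by exact_mod_cast h0
      rw [this, mul_zero]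
    rw [this]; simp only [inv_zero, norm_zero]
    have : (0 : ℤ) ≤ |2 * ρ - 1| + 1 := by positivity
    have : (0 : ℝ) ≤ ((|2 * ρ - 1| + 1 : ℤ) : ℝ) := by exact_mod_cast this
    positivity
  · have e : dd ρ n = ((n : ℤ) * ((n : ℤ) + 2 * ρ - 1) : ℤ) := by unfold dd; push_cast; ring
    have hk : (n : ℤ) ≤ (|2 * ρ - 1| + 1) * |(n : ℤ) + 2 * ρ - 1| := by
      have h1 : 1 ≤ |(n : ℤ) + 2 * ρ - 1| := Int.one_le_abs h0
      have h2 : (n : ℤ) ≤ |(n : ℤ) + 2 * ρ - 1| + |2 * ρ - 1| := by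
        have a1 := le_abs_self ((n : ℤ) + 2 * ρ - 1)
        have a2 := neg_abs_le (2 * ρ - 1)
        linarith
      nlinarith [abs_nonneg (2 * ρ - 1)]
    have hk' : (n : ℝ) ≤ ((|2 * ρ - 1| + 1 : ℤ) : ℝ) * ((|(n : ℤ) + 2 * ρ - 1| : ℤ) : ℝ) := by
      exact_mod_cast hk
    have hpos : (0 : ℝ) < ((|(n : ℤ) + 2 * ρ - 1| : ℤ) : ℝ) := by
      exact_mod_cast abs_pos.2 h0
    have e2 : ‖dd ρ n‖ = (n : ℝ) * ((|(n : ℤ) + 2 * ρ - 1| : ℤ) : ℝ) := by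
      rw [e, Complex.norm_intCast, ← Int.cast_abs, abs_mul]
      push_cast
      simp
    rw [norm_inv, e2, ← one_div, mul_one_div, div_le_div_iff₀ (by positivity) (by positivity)]
    nlinarith

lemma frob_eq (p : ℕ → ℂ) (hp : ∀ n, Odd n → p n = 0) (ρ : ℤ)
    (hρ : p 0 = (ρ : ℂ) * (ρ - 1)) (n : ℕ) :
    ((n : ℂ) + ρ - 1) * (((n : ℂ) + ρ) * cf p (dd ρ) n)
      = ∑ m ∈ Finset.range (n + 1), cf p (dd ρ) m * p (n - m) := by
  have h := cf_rec p (dd ρ) hp (by simp [dd]) (dd_odd ρ) n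
  rw [Finset.sum_range_succ, Nat.sub_self, hρ]
  have e : ∑ m ∈ Finset.range n, cf p (dd ρ) m * p (n - m)
      = ∑ m ∈ Finset.range n, p (n - m) * cf p (dd ρ) m :=
    Finset.sum_congr rfl fun m _ => mul_comm _ _
  rw [e, ← h, dd]
  ring

lemma frob_ode {R : ℝ} (p : ℕ → ℂ) (hg : Good R p) (hp : ∀ n, Odd n → p n = 0) (ρ : ℤ)
    (hρ : p 0 = (ρ : ℂ) * (ρ - 1)) (a : ℂ) {x : ℂ} (hx : x ∈ ball a R \ {a}) :
    deriv (deriv (F a ρ (cf p (dd ρ)))) x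
      = G p (x - a) / (x - a) ^ 2 * F a ρ (cf p (dd ρ)) x := by
  have hc : Good R (cf p (dd ρ)) := cf_good p _ hg _ (dd_bound ρ)
  have hxa : x - a ≠ 0 := sub_ne_zero.2 hx.2
  have hn : ‖x - a‖ < R := by simpa [dist_eq_norm] using hx.1
  rw [hc.deriv2_F a ρ hx]
  have e : G (fun n => ((n : ℂ) + ρ - 1) * (((n : ℂ) + ρ) * cf p (dd ρ) n)) (x - a)
      = G (cf p (dd ρ)) (x - a) * G p (x - a) := by
    unfold G
    rw [tsum_mul_tsum_eq_tsum_sum_range_of_summable_norm (hc.summable hn) (hg.summable hn)]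
    refine tsum_congr fun n => ?_
    beta_reduce
    rw [frob_eq p hp ρ hρ n, Finset.sum_mul]
    refine Finset.sum_congr rfl fun m hm => ?_
    have hm' : m ≤ n := Nat.lt_succ_iff.1 (Finset.mem_range.1 hm)
    have : (x - a) ^ n = (x - a) ^ m * (x - a) ^ (n - m) := by
      rw [← pow_add, Nat.add_sub_cancel' hm']
    rw [this]; ring
  unfold F
  rw [e, zpow_sub₀ hxa]
  norm_cast
  field_simp

lemma G_zero (c : ℕ → ℂ) : G c 0 = c 0 := by
  unfold G
  rw [tsum_eq_single 0]
  · simp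
  · intro n hn; simp [hn]

/-- Even Taylor coefficients. -/
lemma exists_coeff {R : ℝ} (hR : 0 < R) (P : ℂ → ℂ) (hP : DifferentiableOn ℂ P (ball 0 R))
    (hev : ∀ z ∈ ball (0 : ℂ) R, P (-z) = P z) :
    ∃ p : ℕ → ℂ, Good R p ∧ (∀ n, Odd n → p n = 0) ∧ ∀ z ∈ ball (0 : ℂ) R, G p z = P z := by
  set t : ℕ → ℂ := fun n => (n.factorial : ℂ)⁻¹ * iteratedDeriv n P 0 with ht
  have hs : ∀ z ∈ ball (0 : ℂ) R, HasSum (fun n => t n * z ^ n) (P z) := by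
    intro z hz
    have h := Complex.hasSum_taylorSeries_on_ball hP hz
    refine h.congr_fun ?_ |> fun h => h
    intro n
    simp [ht, smul_eq_mul]; ring
  set p : ℕ → ℂ := fun n => t n * ((1 + (-1) ^ n) / 2) with hpdef
  have hs2 : ∀ z ∈ ball (0 : ℂ) R, HasSum (fun n => p n * z ^ n) (P z) := by
    intro z hz
    have h1 := ((hs z hz).add (hs (-z) (by simpa using hz))).div_const 2
    rw [hev z hz] at h1
    have e : (P z + P z) / 2 = P z := by ring
    rw [e] at h1
    have e3 : (fun n => p n * z ^ n) = fun n => (t n * z ^ n + t n * (-z) ^ n) / 2 := by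
      funext n
      rw [neg_pow]; simp only [hpdef]; ring
    rw [e3]; exact h1
  refine ⟨p, ?_, ?_, fun z hz => (hs2 z hz).tsum_eq⟩
  · intro r hr hrR
    have h := (hs2 (r : ℂ) (by simpa [abs_of_nonneg hr] using hrR)).summable.norm
    simpa [abs_of_nonneg hr] using h
  · intro n hn
    simp [hpdef, hn.neg_one_pow]

end Frob

open Frob

theorem stmt4 (a : ℂ) (R : ℝ) (hR : 0 < R) (l : ℕ) (E : ℂ) (q Q : ℂ → ℂ)
    (hQ : AnalyticOn ℂ Q (ball a R))
    (hQa : Q a = (l : ℂ) * ((l : ℂ) + 1))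
    (hq : ∀ x ∈ ball a R, x ≠ a → q x = Q x / (x - a) ^ 2)
    (heven : ∀ z : ℂ, a + z ∈ ball a R → z ≠ 0 → q (a + z) = q (a - z)) :
    ∃ f₁ f₂ : ℂ → ℂ,
      AnalyticOn ℂ f₁ (ball a R \ {a}) ∧
      AnalyticOn ℂ f₂ (ball a R \ {a}) ∧
      (∀ x ∈ ball a R \ {a}, deriv (deriv f₁) x = (q x - E) * f₁ x) ∧
      (∀ x ∈ ball a R \ {a}, deriv (deriv f₂) x = (q x - E) * f₂ x) ∧
      (∀ c₁ c₂ : ℂ, (∀ x ∈ ball a R \ {a}, c₁ * f₁ x + c₂ * f₂ x = 0) →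
        c₁ = 0 ∧ c₂ = 0) := by
  have hmem : ∀ z : ℂ, z ∈ ball (0 : ℂ) R → a + z ∈ ball a R := by
    intro z hz; simpa [dist_eq_norm] using hz
  obtain ⟨p, hg, hp, hG⟩ := exists_coeff hR (fun z => Q (a + z) - E * z ^ 2) (by
      refine DifferentiableOn.sub ?_ (by fun_prop)
      exact hQ.differentiableOn.comp (by fun_prop) hmem) (by
      intro z hz
      by_cases h0 : z = 0
      · simp [h0]
      have h1 := heven z (hmem z hz) h0
      have hz' : -z ∈ ball (0 : ℂ) R := by simpa using hz
      have h2 := hmem _ hz'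
      rw [← sub_eq_add_neg] at h2
      rw [hq _ (hmem z hz) (by simpa using h0), hq _ h2 (by simpa using h0)] at h1
      have e1 : a + z - a = z := by ring
      have e2 : (a - z - a) ^ 2 = z ^ 2 := by ring
      rw [e1, e2] at h1
      have h3 := (div_left_inj' (pow_ne_zero 2 h0)).1 h1
      simp only [← sub_eq_add_neg, h3]
      ring)
  have hp0 : p 0 = (l : ℂ) * (l + 1) := by
    rw [← G_zero p, hG 0 (mem_ball_self hR)]; simp [hQa]
  have hGq : ∀ x ∈ ball a R \ {a}, G p (x - a) / (x - a) ^ 2 = q x - E := by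
    intro x hx
    have hxa : x - a ≠ 0 := sub_ne_zero.2 hx.2
    rw [hG (x - a) (by simpa [dist_eq_norm] using hx.1), hq x hx.1 hx.2]
    simp only [add_sub_cancel]
    field_simp
  set ρ₁ : ℤ := -(l : ℤ) with hρ₁
  set ρ₂ : ℤ := (l : ℤ) + 1 with hρ₂
  have g₁ : Good R (cf p (dd ρ₁)) := cf_good p _ hg _ (dd_bound ρ₁)
  have g₂ : Good R (cf p (dd ρ₂)) := cf_good p _ hg _ (dd_bound ρ₂)
  refine ⟨F a ρ₁ (cf p (dd ρ₁)), F a ρ₂ (cf p (dd ρ₂)), g₁.analyticOn_F a _, g₂.analyticOn_F a _,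
    ?_, ?_, ?_⟩
  · intro x hx
    rw [frob_ode p hg hp ρ₁ (by rw [hp0, hρ₁]; push_cast; ring) a hx, hGq x hx]
  · intro x hx
    rw [frob_ode p hg hp ρ₂ (by rw [hp0, hρ₂]; push_cast; ring) a hx, hGq x hx]
  · intro c₁ c₂ h
    have c1 : ContinuousAt (G (cf p (dd ρ₁))) 0 := (g₁.hasDerivAt (by simpa using hR)).continuousAt
    have c2 : ContinuousAt (G (cf p (dd ρ₂))) 0 := (g₂.hasDerivAt (by simpa using hR)).continuousAt
    have lim0 : ∀ H : ℂ → ℂ, ContinuousAt H 0 → (∀ z ∈ ball (0 : ℂ) R, z ≠ 0 → H z = 0) →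
        H 0 = 0 := by
      intro H hc hz
      have t1 : Filter.Tendsto H (nhdsWithin 0 {0}ᶜ) (nhds (H 0)) := hc.mono_left nhdsWithin_le_nhds
      have t2 : Filter.Tendsto H (nhdsWithin 0 {0}ᶜ) (nhds 0) := by
        refine tendsto_const_nhds.congr' ?_
        filter_upwards [self_mem_nhdsWithin, nhdsWithin_le_nhds (ball_mem_nhds (0 : ℂ) hR)]
          with z hz0 hzR
        exact (hz z hzR hz0).symm
      exact tendsto_nhds_unique t1 t2
    have h' : ∀ z ∈ ball (0 : ℂ) R, z ≠ 0 →
        c₁ * G (cf p (dd ρ₁)) z + c₂ * (z ^ (2 * l + 1) * G (cf p (dd ρ₂)) z) = 0 := by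
      intro z hz hz0
      have h1 := h (a + z) ⟨hmem z hz, by simpa using hz0⟩
      have z1 : z ^ ρ₁ = (z ^ l)⁻¹ := by rw [hρ₁, zpow_neg, zpow_natCast]
      have z2 : z ^ ρ₂ = z ^ (l + 1) := by rw [hρ₂]; exact_mod_cast zpow_natCast z (l + 1)
      simp only [F, add_sub_cancel_left, z1, z2] at h1
      have h2 : z ^ l * (z ^ l)⁻¹ = 1 := mul_inv_cancel₀ (pow_ne_zero _ hz0)
      linear_combination (z ^ l) * h1 - c₁ * G (cf p (dd ρ₁)) z * h2
    have hc1 : c₁ = 0 := by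
      have := lim0 (fun z => c₁ * G (cf p (dd ρ₁)) z + c₂ * (z ^ (2 * l + 1) * G (cf p (dd ρ₂)) z))
        (by fun_prop) h'
      simpa [G_zero, cf_zero] using this
    refine ⟨hc1, ?_⟩
    have := lim0 (fun z => c₂ * G (cf p (dd ρ₂)) z) (by fun_prop) (by
      intro z hz hz0
      have h1 := h' z hz hz0
      rw [hc1, zero_mul, zero_add] at h1
      have h2 : z ^ (2 * l + 1) ≠ 0 := pow_ne_zero _ hz0
      refine mul_left_cancel₀ h2 ?_
      linear_combination h1)
    simpa [G_zero, cf_zero] using this
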